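/- Let A be an n×n real symmetric positive definite matrix with orthonormal eigenbasis e₁,…,e_n and corresponding eigenvalues λ₁,…,λ_n, largest eigenvalue λ_max, smallest eigenvalue λ_min and κ(A) = λ_max/λ_min. Fix η > 0 and set S₁ := span{eᵢ : λᵢ < η} and S₂ := span{eᵢ : λᵢ ≥ η}. Let A_H be an n×n real symmetric matrix with ‖(A − A_H)v‖ ≤ ε₁·λ_max·‖v‖ for all v ∈ S₁ and ‖(A − A_H)v‖ ≤ ε₂·λ_max·‖v‖ for all v ∈ S₂, where ε₁, ε₂ ≥ 0. Assume δ := (2/√3)·ε₁·κ(A) + ε₂·λ_max/η < 1. Then for every v ∈ ℝⁿ, (1 − δ)·vᵀAv ≤ vᵀA_H v ≤ (1 + δ)·vᵀAv; consequently every eigenvalue ρ of A_H⁻¹A satisfies 1/(1+δ) ≤ ρ ≤ 1/(1−δ) and κ(A_H⁻¹A) ≤ (1+δ)/(1−δ). -/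

import Mathlib

open Matrix

/-- Euclidean norm on ℝⁿ. -/
noncomputable def enorm {n : ℕ} (v : Fin n → ℝ) : ℝ := Real.sqrt (∑ i, v i ^ 2)

theorem tp_comb {n : ℕ} (e : Fin n → Fin n → ℝ)
    (hortho : ∀ i j, e i ⬝ᵥ e j = if i = j then (1 : ℝ) else 0) (c d : Fin n → ℝ) :
    (∑ i, c i • e i) ⬝ᵥ (∑ i, d i • e i) = ∑ i, c i * d i := by
  simp [sum_dotProduct, dotProduct_sum, hortho, mul_comm]

theorem tp_mul {n : ℕ} (A : Matrix (Fin n) (Fin n) ℝ) (e : Fin n → Fin n → ℝ) (lam : Fin n → ℝ)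
    (heig : ∀ i, A.mulVec (e i) = lam i • e i) (c : Fin n → ℝ) :
    A.mulVec (∑ i, c i • e i) = ∑ i, (c i * lam i) • e i := by
  rw [← Matrix.mulVecLin_apply, map_sum]
  simp [heig, smul_smul, Matrix.mulVec_smul]

theorem tp_exp {n : ℕ} (e : Fin n → Fin n → ℝ)
    (hortho : ∀ i j, e i ⬝ᵥ e j = if i = j then (1 : ℝ) else 0) (v : Fin n → ℝ) :
    v = ∑ i, (e i ⬝ᵥ v) • e i := by
  have h1 : (Matrix.of e) * (Matrix.of e)ᵀ = 1 := by
    ext i j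
    rw [Matrix.one_apply, ← hortho i j]
    rfl
  have h2 := mul_eq_one_comm.mp h1
  have h3 : (Matrix.of e)ᵀ.mulVec ((Matrix.of e).mulVec v) = v := by
    rw [Matrix.mulVec_mulVec, h2, Matrix.one_mulVec]
  conv_lhs => rw [← h3]
  ext j
  simp [Matrix.mulVec, dotProduct, mul_comm]

theorem tp_sq {n : ℕ} (v : Fin n → ℝ) : _root_.enorm v ^ 2 = v ⬝ᵥ v := by
  unfold _root_.enorm
  rw [Real.sq_sqrt (Finset.sum_nonneg fun i _ => sq_nonneg _)]
  simp [dotProduct, sq]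

theorem tp_cs {n : ℕ} (v w : Fin n → ℝ) : |v ⬝ᵥ w| ≤ _root_.enorm v * _root_.enorm w := by
  unfold _root_.enorm
  rw [← Real.sqrt_mul (Finset.sum_nonneg fun i _ => sq_nonneg _)]
  apply Real.abs_le_sqrt
  exact Finset.sum_mul_sq_le_sq_mul_sq _ _ _

theorem tp_scalar (L l η ε₁ ε₂ x y P Q p q r δ : ℝ) (hL : 0 < L) (hl : 0 < l) (hη : 0 < η)
    (hε₁ : 0 ≤ ε₁) (hε₂ : 0 ≤ ε₂) (hx : 0 ≤ x) (hy : 0 ≤ y)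
    (hP : l * x ^ 2 ≤ P) (hQ : η * y ^ 2 ≤ Q)
    (hp : |p| ≤ x * (ε₁ * L * x)) (hq : |q| ≤ y * (ε₂ * L * y))
    (hr1 : |r| ≤ y * (ε₁ * L * x)) (hr2 : |r| ≤ x * (ε₂ * L * y))
    (hδ : δ = 2 / Real.sqrt 3 * ε₁ * (L / l) + ε₂ * L / η) :
    |p + 2 * r + q| ≤ δ * (P + Q) := by
  have hc : 1 ≤ 2 / Real.sqrt 3 := by
    rw [le_div_iff₀ (by positivity), one_mul]
    rw [Real.sqrt_le_left (by norm_num)]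
    norm_num
  have hd : ε₁ * L / l + ε₂ * L / η ≤ δ := by
    rw [hδ]
    have : 0 ≤ ε₁ * L / l := by positivity
    have h2 : 2 / Real.sqrt 3 * ε₁ * (L / l) = 2 / Real.sqrt 3 * (ε₁ * L / l) := by ring
    rw [h2]
    nlinarith
  have h0 : 0 ≤ ε₁ * L / l + ε₂ * L / η := by positivity
  have hPQ : 0 ≤ l * x ^ 2 + η * y ^ 2 := by positivity
  have step : |p + 2 * r + q| ≤ |p| + 2 * |r| + |q| := by
    have := abs_add_le (p + 2 * r) q
    have h' := abs_add_le p (2 * r)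
    rw [abs_mul, abs_two] at h'
    linarith
  have hm : |r| ≤ min ε₁ ε₂ * L * x * y := by
    rcases min_choice ε₁ ε₂ with h | h <;> rw [h] <;> linarith
  have e1 : (ε₁ * L / l + ε₂ * L / η) * (l * x ^ 2 + η * y ^ 2)
      = ε₁ * L * x ^ 2 + ε₂ * L * y ^ 2 + (ε₁ * (η / l * y ^ 2) + ε₂ * (l / η * x ^ 2)) * L := by
    field_simp
    ring
  have e2 : 2 * (min ε₁ ε₂ * L * x * y)
      ≤ (ε₁ * (η / l * y ^ 2) + ε₂ * (l / η * x ^ 2)) * L := by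
    have hm0 : 0 ≤ min ε₁ ε₂ := le_min hε₁ hε₂
    have a1 : min ε₁ ε₂ * (η / l * y ^ 2) ≤ ε₁ * (η / l * y ^ 2) :=
      mul_le_mul_of_nonneg_right (min_le_left _ _) (by positivity)
    have a2 : min ε₁ ε₂ * (l / η * x ^ 2) ≤ ε₂ * (l / η * x ^ 2) :=
      mul_le_mul_of_nonneg_right (min_le_right _ _) (by positivity)
    have a3 : 2 * (x * y) ≤ η / l * y ^ 2 + l / η * x ^ 2 := by
      have : η / l * y ^ 2 + l / η * x ^ 2 - 2 * (x * y) = (η * y - l * x) ^ 2 / (l * η) := by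
        field_simp
        ring
      have : 0 ≤ (η * y - l * x) ^ 2 / (l * η) := by positivity
      linarith
    have a4 := mul_le_mul_of_nonneg_left a3 hm0
    have a5 : min ε₁ ε₂ * (2 * (x * y)) ≤ ε₁ * (η / l * y ^ 2) + ε₂ * (l / η * x ^ 2) := by
      linarith
    have a6 := mul_le_mul_of_nonneg_right a5 hL.le
    linarith
  have e3 : (ε₁ * L / l + ε₂ * L / η) * (l * x ^ 2 + η * y ^ 2) ≤ δ * (P + Q) :=
    mul_le_mul hd (by linarith) hPQ (by linarith)
  linarith

/-- Two-piece splitting by an eigenvalue threshold `η > 0`.  Let `A` be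
SPD with orthonormal eigenbasis `e₁,…,e_n`, eigenvalues `λᵢ`, extreme eigenvalues
`λ_max, λ_min`, and `S₁ := span{eᵢ : λᵢ < η}`, `S₂ := span{eᵢ : λᵢ ≥ η}`.  If the
symmetric matrix `A_H` satisfies `‖(A − A_H)v‖ ≤ ε₁·λ_max·‖v‖` on `S₁` and
`‖(A − A_H)v‖ ≤ ε₂·λ_max·‖v‖` on `S₂`, and
`δ := (2/√3)·ε₁·κ(A) + ε₂·λ_max/η < 1`, then
`(1 − δ)·vᵀAv ≤ vᵀA_Hv ≤ (1 + δ)·vᵀAv` for every `v`; consequently every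
eigenvalue `ρ` of `A_H⁻¹A` satisfies `1/(1+δ) ≤ ρ ≤ 1/(1−δ)` and
`κ(A_H⁻¹A) ≤ (1+δ)/(1−δ)`. -/
theorem preconditioner_two_piece_splitting {n : ℕ}
    (A AH : Matrix (Fin n) (Fin n) ℝ)
    (hA : A.PosDef) (hAH : AH.IsSymm)
    (e : Fin n → Fin n → ℝ) (lam : Fin n → ℝ)
    (heig : ∀ i, A.mulVec (e i) = lam i • e i)
    (hortho : ∀ i j, e i ⬝ᵥ e j = if i = j then (1 : ℝ) else 0)
    (lammax lammin : ℝ)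
    (hmax : (∃ i, lam i = lammax) ∧ ∀ i, lam i ≤ lammax)
    (hmin : (∃ i, lam i = lammin) ∧ ∀ i, lammin ≤ lam i)
    (η : ℝ) (hη : 0 < η)
    (ε₁ ε₂ : ℝ) (hε₁ : 0 ≤ ε₁) (hε₂ : 0 ≤ ε₂)
    (h₁ : ∀ v ∈ Submodule.span ℝ {v : Fin n → ℝ | ∃ i, lam i < η ∧ v = e i},
        _root_.enorm ((A - AH).mulVec v) ≤ ε₁ * lammax * _root_.enorm v)
    (h₂ : ∀ v ∈ Submodule.span ℝ {v : Fin n → ℝ | ∃ i, η ≤ lam i ∧ v = e i},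
        _root_.enorm ((A - AH).mulVec v) ≤ ε₂ * lammax * _root_.enorm v)
    (δ : ℝ)
    (hδ : δ = 2 / Real.sqrt 3 * ε₁ * (lammax / lammin) + ε₂ * lammax / η)
    (hδ1 : δ < 1) :
    (∀ v : Fin n → ℝ,
        (1 - δ) * (v ⬝ᵥ A.mulVec v) ≤ v ⬝ᵥ AH.mulVec v ∧
        v ⬝ᵥ AH.mulVec v ≤ (1 + δ) * (v ⬝ᵥ A.mulVec v)) ∧
    (∀ (ρ : ℝ) (v : Fin n → ℝ), v ≠ 0 → (AH⁻¹ * A).mulVec v = ρ • v →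
        1 / (1 + δ) ≤ ρ ∧ ρ ≤ 1 / (1 - δ)) ∧
    (∀ (ρ₁ ρ₂ : ℝ) (v₁ v₂ : Fin n → ℝ), v₁ ≠ 0 → v₂ ≠ 0 →
        (AH⁻¹ * A).mulVec v₁ = ρ₁ • v₁ → (AH⁻¹ * A).mulVec v₂ = ρ₂ • v₂ →
        ρ₁ / ρ₂ ≤ (1 + δ) / (1 - δ)) := by
  have hpos : ∀ v : Fin n → ℝ, v ≠ 0 → 0 < v ⬝ᵥ A.mulVec v := fun v hv => by
    simpa using hA.dotProduct_mulVec_pos hv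
  have hlam : ∀ i, 0 < lam i := fun i => by
    have hne : e i ≠ 0 := by
      intro h
      have := hortho i i
      simp [h] at this
    have := hpos (e i) hne
    rw [heig, dotProduct_smul, hortho] at this
    simpa using this
  have hL : 0 < lammax := by
    obtain ⟨i, hi⟩ := hmax.1
    exact hi ▸ hlam i
  have hl : 0 < lammin := by
    obtain ⟨i, hi⟩ := hmin.1
    exact hi ▸ hlam i
  have hδ0 : 0 ≤ δ := by
    rw [hδ]
    positivity
  have hsymE : ∀ a b : Fin n → ℝ, a ⬝ᵥ (A - AH).mulVec b = b ⬝ᵥ (A - AH).mulVec a := by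
    intro a b
    have hAt : Aᵀ = A := by simpa using hA.isHermitian.eq
    have ht : (A - AH)ᵀ = A - AH := by
      rw [Matrix.transpose_sub, hAt, hAH.eq]
    rw [Matrix.dotProduct_mulVec, ← Matrix.mulVec_transpose, ht, dotProduct_comm]
  have key : ∀ v : Fin n → ℝ, |v ⬝ᵥ (A - AH).mulVec v| ≤ δ * (v ⬝ᵥ A.mulVec v) := by
    intro v
    set c : Fin n → ℝ := fun i => e i ⬝ᵥ v with hc
    set c₁ : Fin n → ℝ := fun i => if lam i < η then c i else 0 with hc₁
    set c₂ : Fin n → ℝ := fun i => if lam i < η then 0 else c i with hc₂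
    set a := ∑ i, c₁ i • e i with ha
    set b := ∑ i, c₂ i • e i with hb
    have hv : v = a + b := by
      rw [ha, hb, ← Finset.sum_add_distrib]
      conv_lhs => rw [tp_exp e hortho v]
      refine Finset.sum_congr rfl fun i _ => ?_
      simp only [hc₁, hc₂, hc]
      split_ifs <;> simp
    have haS : a ∈ Submodule.span ℝ {v : Fin n → ℝ | ∃ i, lam i < η ∧ v = e i} := by
      refine Submodule.sum_mem _ fun i _ => ?_
      by_cases h : lam i < η
      · exact Submodule.smul_mem _ _ (Submodule.subset_span ⟨i, h, rfl⟩)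
      · simp [hc₁, h]
    have hbS : b ∈ Submodule.span ℝ {v : Fin n → ℝ | ∃ i, η ≤ lam i ∧ v = e i} := by
      refine Submodule.sum_mem _ fun i _ => ?_
      by_cases h : lam i < η
      · simp [hc₂, h]
      · exact Submodule.smul_mem _ _ (Submodule.subset_span ⟨i, not_lt.mp h, rfl⟩)
    have hAab : v ⬝ᵥ A.mulVec v = a ⬝ᵥ A.mulVec a + b ⬝ᵥ A.mulVec b := by
      have h12 : a ⬝ᵥ A.mulVec b = 0 := by
        rw [ha, hb, tp_mul A e lam heig, tp_comb e hortho]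
        refine Finset.sum_eq_zero fun i _ => ?_
        simp only [hc₁, hc₂]
        split_ifs <;> simp
      have h21 : b ⬝ᵥ A.mulVec a = 0 := by
        rw [ha, hb, tp_mul A e lam heig, tp_comb e hortho]
        refine Finset.sum_eq_zero fun i _ => ?_
        simp only [hc₁, hc₂]
        split_ifs <;> simp
      rw [hv, Matrix.mulVec_add, add_dotProduct, dotProduct_add, dotProduct_add, h12, h21]
      ring
    have hP : lammin * _root_.enorm a ^ 2 ≤ a ⬝ᵥ A.mulVec a := by
      rw [tp_sq, ha, tp_mul A e lam heig, tp_comb e hortho, tp_comb e hortho, Finset.mul_sum]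
      refine Finset.sum_le_sum fun i _ => ?_
      nlinarith [hmin.2 i, mul_self_nonneg (c₁ i)]
    have hQ : η * _root_.enorm b ^ 2 ≤ b ⬝ᵥ A.mulVec b := by
      rw [tp_sq, hb, tp_mul A e lam heig, tp_comb e hortho, tp_comb e hortho, Finset.mul_sum]
      refine Finset.sum_le_sum fun i _ => ?_
      by_cases h : lam i < η
      · simp [hc₂, h]
      · nlinarith [not_lt.mp h, mul_self_nonneg (c₂ i)]
    have hEab : v ⬝ᵥ (A - AH).mulVec v = a ⬝ᵥ (A - AH).mulVec a
        + 2 * (a ⬝ᵥ (A - AH).mulVec b) + b ⬝ᵥ (A - AH).mulVec b := by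
      rw [hv, Matrix.mulVec_add, add_dotProduct, dotProduct_add, dotProduct_add, hsymE b a]
      ring
    have hn : ∀ w : Fin n → ℝ, 0 ≤ _root_.enorm w := fun w => Real.sqrt_nonneg _
    rw [hEab, hAab]
    refine tp_scalar lammax lammin η ε₁ ε₂ (_root_.enorm a) (_root_.enorm b) _ _ _ _ _ δ
      hL hl hη hε₁ hε₂ (hn a) (hn b) hP hQ ?_ ?_ ?_ ?_ hδ
    · exact (tp_cs _ _).trans (mul_le_mul_of_nonneg_left (h₁ a haS) (hn a))
    · exact (tp_cs _ _).trans (mul_le_mul_of_nonneg_left (h₂ b hbS) (hn b))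
    · rw [hsymE]
      exact (tp_cs _ _).trans (mul_le_mul_of_nonneg_left (h₁ a haS) (hn b))
    · exact (tp_cs _ _).trans (mul_le_mul_of_nonneg_left (h₂ b hbS) (hn a))
  have hquad : ∀ v : Fin n → ℝ,
        (1 - δ) * (v ⬝ᵥ A.mulVec v) ≤ v ⬝ᵥ AH.mulVec v ∧
        v ⬝ᵥ AH.mulVec v ≤ (1 + δ) * (v ⬝ᵥ A.mulVec v) := by
    intro v
    have h := abs_le.mp (key v)
    rw [Matrix.sub_mulVec, dotProduct_sub] at h
    constructor <;> linarith [h.1, h.2]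
  have hunit : IsUnit AH.det := by
    rw [isUnit_iff_ne_zero]
    intro h
    obtain ⟨v, hv, hv0⟩ := Matrix.exists_mulVec_eq_zero_iff.mpr h
    have h1 := (hquad v).1
    rw [hv0, dotProduct_zero] at h1
    nlinarith [hpos v hv]
  have heigs : ∀ (ρ : ℝ) (v : Fin n → ℝ), v ≠ 0 → (AH⁻¹ * A).mulVec v = ρ • v →
        1 / (1 + δ) ≤ ρ ∧ ρ ≤ 1 / (1 - δ) := by
    intro ρ v hv h
    have h1 : A.mulVec v = ρ • AH.mulVec v := by
      rw [← Matrix.mulVec_smul, ← h, Matrix.mulVec_mulVec, Matrix.mul_nonsing_inv_cancel_left _ _ hunit]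
    have h2 : v ⬝ᵥ A.mulVec v = ρ * (v ⬝ᵥ AH.mulVec v) := by
      rw [h1, dotProduct_smul, smul_eq_mul]
    have hp := hpos v hv
    obtain ⟨q1, q2⟩ := hquad v
    have hd : 0 < 1 - δ := by linarith
    have hq : 0 < v ⬝ᵥ AH.mulVec v := lt_of_lt_of_le (mul_pos hd hp) q1
    rw [h2] at q1 q2
    constructor
    · rw [div_le_iff₀ (by linarith)]
      by_contra hh
      nlinarith
    · rw [le_div_iff₀ hd]
      by_contra hh
      nlinarith
  refine ⟨hquad, heigs, ?_⟩
  intro ρ₁ ρ₂ v₁ v₂ hv₁ hv₂ e₁ e₂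
  have b1 := (heigs ρ₁ v₁ hv₁ e₁).2
  have b2 := (heigs ρ₂ v₂ hv₂ e₂).1
  have hd : 0 < 1 - δ := by linarith
  have hd' : 0 < 1 + δ := by linarith
  have hr : 0 < ρ₂ := lt_of_lt_of_le (by positivity) b2
  rw [le_div_iff₀ hd] at b1
  rw [div_le_iff₀ hd'] at b2
  rw [div_le_div_iff₀ hr hd]
  linarith
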